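/- The number of intervals in the Tamari lattice Tam_n equals (2/(n(n+1))) · C(4n+1, n-1) for all n ≥ 1. -/

import Mathlib

/-- Binary trees: a leaf or a binary node with two subtrees. -/
inductive BT : Type
  | leaf : BT
  | node : BT → BT → BT

namespace BT

/-- Number of binary (internal) nodes. -/
def size : BT → ℕ
  | leaf => 0
  | node l r => l.size + r.size + 1

/-- One right rotation somewhere in the tree: ((A,B),C) ↦ (A,(B,C)). -/
inductive Rot : BT → BT → Prop
  | rotate (A B C : BT) : Rot (node (node A B) C) (node A (node B C))
  | left {l l' : BT} (r : BT) : Rot l l' → Rot (node l r) (node l' r)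
  | right (l : BT) {r r' : BT} : Rot r r' → Rot (node l r) (node l r')

/-- Tamari order: reflexive-transitive closure of right rotation. -/
def tle (T T' : BT) : Prop := Relation.ReflTransGen Rot T T'

/-- Bracket-vector: sizes of right subtrees of nodes, in infix order. -/
def bracket : BT → List ℕ
  | leaf => []
  | node l r => bracket l ++ r.size :: bracket r

/-- Dual bracket-vector: sizes of left subtrees of nodes, in infix order. -/
def dualBracket : BT → List ℕ
  | leaf => []
  | node l r => dualBracket l ++ l.size :: dualBracket r

/-- Canopy word: for each leaf (left to right), 1 if it is a left child, 0 if a right child;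
the argument `b` is the value assigned to the tree if it is itself a leaf. -/
def canopyAux (b : ℕ) : BT → List ℕ
  | leaf => [b]
  | node l r => canopyAux 1 l ++ canopyAux 0 r

/-- Canopy-vector of a binary tree. -/
def canopy (T : BT) : List ℕ := canopyAux 1 T

/-- Left-right mirror. -/
def mir : BT → BT
  | leaf => leaf
  | node l r => node (mir r) (mir l)

/-- Tamari interval of size n. -/
def interval (p : BT × BT) (n : ℕ) : Prop :=
  p.1.size = n ∧ p.2.size = n ∧ tle p.1 p.2

/-- Tamari interval (of unspecified size). -/
def isInt (p : BT × BT) : Prop := p.1.size = p.2.size ∧ tle p.1 p.2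

/-- The rise operation (T,T') ↦ ((T,ε),(ε,T')). -/
def riseF (p : BT × BT) : BT × BT := (node p.1 leaf, node leaf p.2)

/-- An interval is modern when its rise is again an interval. -/
def modern (p : BT × BT) : Prop := tle (node p.1 leaf) (node leaf p.2)

/-- Infinitely modern: every iterated rise is an interval. -/
def infModern (p : BT × BT) : Prop :=
  ∀ k : ℕ, tle ((riseF^[k] p).1) ((riseF^[k] p).2)

/-- Synchronized: equal canopies. -/
def synced (p : BT × BT) : Prop := canopy p.1 = canopy p.2

/-- Self-dual: equal to its dual (mir T', mir T). -/
def selfDual (p : BT × BT) : Prop := mir p.2 = p.1 ∧ mir p.1 = p.2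

/-- Number of positions where the two canopies agree. -/
def agreeCount (p : BT × BT) : ℕ :=
  ((List.range (p.1.size + 1)).filter
    (fun i => (canopy p.1).getD i 0 == (canopy p.2).getD i 0)).length

/-- Number of canopy positions of joint type (a on top, b on bottom), for an interval (T,T')
with T' the upper tree. -/
def typeCount (a b : ℕ) (p : BT × BT) : ℕ :=
  ((List.range (p.1.size + 1)).filter
    (fun i => ((canopy p.2).getD i 0 == a) && ((canopy p.1).getD i 0 == b))).length

end BT

namespace BT

/-- Replace the leftmost leaf of the first tree by the second tree. -/
def plug : BT → BT → BT
  | leaf, A => A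
  | node l r, A => node (plug l A) r

/-- Number of nodes on the left spine. -/
def spine : BT → ℕ
  | leaf => 0
  | node l _ => spine l + 1

theorem size_plug (B A : BT) : (plug B A).size = B.size + A.size := by
  induction B with
  | leaf => simp [plug, size]
  | node l r ihl _ => simp only [plug, size, ihl]; omega

theorem spine_plug (B A : BT) : spine (plug B A) = spine B + spine A := by
  induction B with
  | leaf => simp [plug, spine]
  | node l r ihl _ => simp only [plug, spine, ihl]; omega

theorem Rot.size_eq {T U : BT} (h : Rot T U) : T.size = U.size := by
  induction h with
  | rotate A B C => simp only [size]; omega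
  | left r _ ih => simp only [size, ih]
  | right l _ ih => simp only [size, ih]

theorem tle.size_eq {T U : BT} (h : tle T U) : T.size = U.size := by
  induction h with
  | refl => rfl
  | tail _ h ih => exact ih.trans h.size_eq

theorem tle_refl (T : BT) : tle T T := Relation.ReflTransGen.refl

theorem tle.trans' {T U V : BT} (h : tle T U) (h' : tle U V) : tle T V :=
  Relation.ReflTransGen.trans h h'

theorem Rot.tle {T U : BT} (h : Rot T U) : tle T U := Relation.ReflTransGen.single h

theorem tle_left {l l' : BT} (r : BT) (h : tle l l') : tle (node l r) (node l' r) :=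
  Relation.ReflTransGen.lift (fun l => node l r) (fun _ _ h => Rot.left r h) _ _ h

theorem tle_right (l : BT) {r r' : BT} (h : tle r r') : tle (node l r) (node l r') :=
  Relation.ReflTransGen.lift (fun r => node l r) (fun _ _ h => Rot.right l h) _ _ h

theorem plug_tle (B T A : BT) : tle (plug B (node T A)) (node T (plug B A)) := by
  induction B with
  | leaf => exact tle_refl _
  | node l r ihl _ => exact (tle_left r ihl).trans' (Rot.rotate _ _ _).tle

theorem rot_plug (B T1 A T : BT) (h : Rot T (plug B (node T1 A))) :
    ∃ B' T1' A', T = plug B' (node T1' A') ∧ tle T1' T1 ∧ tle (plug B' A') (plug B A) := by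
  induction B generalizing T with
  | leaf =>
    simp only [plug] at h ⊢
    cases h with
    | rotate _ P Q => exact ⟨node leaf Q, T1, P, rfl, tle_refl _, tle_refl _⟩
    | left _ h => exact ⟨leaf, _, A, rfl, h.tle, tle_refl _⟩
    | right _ h => exact ⟨leaf, T1, _, rfl, tle_refl _, h.tle⟩
  | node B0 C ih _ =>
    simp only [plug] at h ⊢
    cases h with
    | rotate _ Q R =>
      exact ⟨node (node B0 Q) R, T1, A, rfl, tle_refl _, (Rot.rotate _ _ _).tle⟩
    | left _ h =>
      obtain ⟨B', T1', A', rfl, h1, h2⟩ := ih _ h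
      exact ⟨node B' C, T1', A', rfl, h1, tle_left _ h2⟩
    | @right _ C' _ h => exact ⟨node B0 C', T1, A, rfl, tle_refl _, (Rot.right _ h).tle⟩

theorem tle_node_iff (T L R : BT) : tle T (node L R) ↔
    ∃ B T1 A, T = plug B (node T1 A) ∧ tle T1 L ∧ tle (plug B A) R := by
  constructor
  · intro h
    induction h using Relation.ReflTransGen.head_induction_on with
    | refl => exact ⟨leaf, L, R, rfl, tle_refl _, tle_refl _⟩
    | head h _ ih =>
      obtain ⟨B, T1, A, rfl, h1, h2⟩ := ih
      obtain ⟨B', T1', A', rfl, h3, h4⟩ := rot_plug _ _ _ _ h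
      exact ⟨B', T1', A', rfl, h3.trans' h1, h4.trans' h2⟩
  · rintro ⟨B, T1, A, rfl, h1, h2⟩
    exact (plug_tle B T1 A).trans' ((tle_left _ h1).trans' (tle_right _ h2))

theorem plug_inj (B B' T T' A A' : BT) (hs : T.size = T'.size)
    (h : plug B (node T A) = plug B' (node T' A')) : B = B' ∧ T = T' ∧ A = A' := by
  induction B generalizing B' with
  | leaf =>
    cases B' with
    | leaf => simp only [plug, node.injEq] at h; exact ⟨rfl, h⟩
    | node l r =>
      simp only [plug, node.injEq] at h
      rw [h.1, size_plug, size] at hs; omega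
  | node l r ih _ =>
    cases B' with
    | leaf =>
      simp only [plug, node.injEq] at h
      rw [← h.1, size_plug, size] at hs; omega
    | node l' r' =>
      simp only [plug, node.injEq] at h
      obtain ⟨rfl, h'⟩ := ih _ h.1
      exact ⟨by rw [h.2], h'⟩

open Classical in
/-- All ways of writing a tree as `plug B A`, as pairs `(A, B)`. -/
noncomputable def splits : BT → Finset (BT × BT)
  | leaf => {(leaf, leaf)}
  | node l r => insert (node l r, leaf) ((splits l).image fun q => (q.1, node q.2 r))

theorem mem_splits (T : BT) (q : BT × BT) : q ∈ splits T ↔ plug q.2 q.1 = T := by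
  induction T generalizing q with
  | leaf =>
    obtain ⟨A, B⟩ := q
    cases B <;> simp [splits, plug]
  | node l r ih _ =>
    obtain ⟨A, B⟩ := q
    simp only [splits, Finset.mem_insert, Finset.mem_image, Prod.mk.injEq, ih]
    cases B with
    | leaf => simp [plug]
    | node l' r' =>
      simp only [plug, node.injEq, reduceCtorEq, and_false, false_or]
      constructor
      · rintro ⟨q, h1, rfl, rfl, rfl⟩; exact ⟨h1, rfl⟩
      · rintro ⟨h1, rfl⟩; exact ⟨(A, l'), h1, rfl, rfl, rfl⟩

open Classical in
theorem sum_splits {R : Type*} [CommRing R] (x : R) (T : BT) :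
    ∑ q ∈ splits T, x ^ spine q.2 = ∑ k ∈ Finset.range (spine T + 1), x ^ k := by
  induction T with
  | leaf => simp [splits, spine]
  | node l r ih _ =>
    rw [splits, Finset.sum_insert (by simp), Finset.sum_image, Finset.sum_range_succ']
    · simp only [spine, pow_succ, ← Finset.sum_mul, ih]
      simp [add_comm]
    · rintro ⟨a, b⟩ _ ⟨c, d⟩ _ h
      simpa using h

theorem finite_size (n : ℕ) : {T : BT | T.size = n}.Finite := by
  induction n using Nat.strong_induction_on with
  | _ n ih =>
    refine Set.Finite.subset (s := {leaf} ∪ ⋃ i : Fin n, ⋃ j : Fin n,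
      (fun q : BT × BT => node q.1 q.2) '' ({T | T.size = (i : ℕ)} ×ˢ {T | T.size = (j : ℕ)})) ?_ ?_
    · refine (Set.finite_singleton _).union (Set.finite_iUnion fun i => Set.finite_iUnion fun j => ?_)
      exact ((ih i i.2).prod (ih j j.2)).image _
    · rintro (_ | ⟨l, r⟩) h
      · simp
      · simp only [Set.mem_ofPred_eq, size] at h
        right
        simp only [Set.mem_iUnion]
        exact ⟨⟨l.size, by omega⟩, ⟨r.size, by omega⟩, (l, r), ⟨rfl, rfl⟩, rfl⟩

theorem finite_interval (n : ℕ) : {p : BT × BT | interval p n}.Finite :=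
  ((finite_size n).prod (finite_size n)).subset fun _ h => ⟨h.1, h.2.1⟩

/-- The finset of intervals of size `n`. -/
noncomputable def ints (n : ℕ) : Finset (BT × BT) := (finite_interval n).toFinset

theorem mem_ints (n : ℕ) (p : BT × BT) : p ∈ ints n ↔ interval p n := by simp [ints]

/-- Weighted count of intervals of size `n`. -/
noncomputable def W {R : Type*} [CommRing R] (x : R) (n : ℕ) : R :=
  ∑ p ∈ ints n, x ^ (spine p.1 + 1)

theorem W_one {R : Type*} [CommRing R] (n : ℕ) : W (1 : R) n = ((ints n).card : R) := by
  simp [W]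

theorem map_W {R S : Type*} [CommRing R] [CommRing S] (e : R →+* S) (x : R) (n : ℕ) :
    e (W x n) = W (e x) n := by
  simp [W]

theorem ints_zero : ints 0 = {(leaf, leaf)} := by
  ext ⟨a, b⟩
  rw [mem_ints, Finset.mem_singleton]
  constructor
  · rintro ⟨h1, h2, -⟩
    cases a <;> cases b <;> simp_all [size]
  · intro h
    simp only [Prod.mk.injEq] at h
    obtain ⟨rfl, rfl⟩ := h
    exact ⟨rfl, rfl, tle_refl _⟩

theorem W_zero {R : Type*} [CommRing R] (x : R) : W x 0 = x := by
  simp [W, ints_zero, spine]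

theorem W_succ_aux {R : Type*} [CommRing R] (x : R) (n : ℕ) :
    W x (n + 1) = ∑ ij ∈ Finset.HasAntidiagonal.antidiagonal n, ∑ p ∈ ints ij.1, ∑ q ∈ ints ij.2,
      ∑ s ∈ splits q.1, x ^ (spine p.1 + 1) * (x * x ^ spine s.2) := by
  simp only [Finset.sum_sigma', W]
  symm
  refine Finset.sum_bij
    (fun w _ => (plug w.2.2.2.2 (node w.2.1.1 w.2.2.2.1), node w.2.1.2 w.2.2.1.2)) ?_ ?_ ?_ ?_
  · rintro ⟨⟨i, j⟩, ⟨p, p'⟩, ⟨q, q'⟩, ⟨A, B⟩⟩ h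
    simp only [Finset.mem_sigma, Finset.HasAntidiagonal.mem_antidiagonal, mem_ints, mem_splits] at h
    obtain ⟨h0, ⟨h1, h2, h3⟩, ⟨h4, h5, h6⟩, h7⟩ := h
    rw [mem_ints]
    simp only at *
    have ht : tle (plug B (node p A)) (node p' q') :=
      (tle_node_iff _ _ _).2 ⟨B, p, A, rfl, h3, h7 ▸ h6⟩
    have hz : (node p' q').size = n + 1 := by simp only [size]; omega
    exact ⟨ht.size_eq.trans hz, hz, ht⟩
  · rintro ⟨⟨i, j⟩, ⟨p, p'⟩, ⟨q, q'⟩, ⟨A, B⟩⟩ h ⟨⟨i2, j2⟩, ⟨p2, p2'⟩, ⟨q2, q2'⟩, ⟨A2, B2⟩⟩ hh e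
    simp only [Finset.mem_sigma, Finset.HasAntidiagonal.mem_antidiagonal, mem_ints, mem_splits] at h hh
    obtain ⟨h0, ⟨h1, h2, h3⟩, ⟨h4, h5, h6⟩, h7⟩ := h
    obtain ⟨g0, ⟨g1, g2, g3⟩, ⟨g4, g5, g6⟩, g7⟩ := hh
    simp only [Prod.mk.injEq, node.injEq] at *
    obtain ⟨e1, rfl, rfl⟩ := e
    obtain ⟨rfl, rfl, rfl⟩ := plug_inj _ _ _ _ _ _ (h3.size_eq.trans g3.size_eq.symm) e1
    subst h7 g7 h2 g2 h5 g5
    rfl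
  · rintro ⟨T, U⟩ h
    rw [mem_ints] at h
    obtain ⟨h1, h2, h3⟩ := h
    simp only at *
    cases U with
    | leaf => simp [size] at h2
    | node L R =>
      obtain ⟨B, T1, A, rfl, h4, h5⟩ := (tle_node_iff _ _ _).1 h3
      simp only [size] at h2
      refine ⟨⟨(L.size, R.size), (T1, L), (plug B A, R), (A, B)⟩, ?_, rfl⟩
      simp only [Finset.mem_sigma, Finset.HasAntidiagonal.mem_antidiagonal, mem_ints, mem_splits]
      exact ⟨by omega, ⟨h4.size_eq, rfl, h4⟩, ⟨h5.size_eq, rfl, h5⟩, trivial⟩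
  · rintro ⟨⟨i, j⟩, ⟨p, p'⟩, ⟨q, q'⟩, ⟨A, B⟩⟩ h
    simp only [spine_plug, spine]
    ring

theorem W_succ {R : Type*} [CommRing R] (x : R) (n : ℕ) :
    (x - 1) * W x (n + 1) =
      x * ∑ ij ∈ Finset.HasAntidiagonal.antidiagonal n, W x ij.1 * (W x ij.2 - W 1 ij.2) := by
  rw [W_succ_aux, Finset.mul_sum, Finset.mul_sum]
  refine Finset.sum_congr rfl fun ij _ => ?_
  simp only [← Finset.mul_sum, sum_splits]
  rw [← Finset.sum_mul, ← W]
  have : (x - 1) * ∑ q ∈ ints ij.2, ∑ k ∈ Finset.range (spine q.1 + 1), x ^ k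
      = W x ij.2 - W 1 ij.2 := by
    rw [W, W, ← Finset.sum_sub_distrib, Finset.mul_sum]
    refine Finset.sum_congr rfl fun q _ => ?_
    rw [mul_geom_sum, one_pow]
  rw [← this]
  ring

end BT
namespace BT

open Finset

/-- Truncated Cauchy product. -/
theorem trunc_mul_dvd {R : Type*} [CommRing R] (c d : ℕ → R) (t : R) (N : ℕ) :
    t ^ N ∣ (∑ i ∈ range N, c i * t ^ i) * (∑ j ∈ range N, d j * t ^ j)
      - ∑ n ∈ range N, (∑ ij ∈ HasAntidiagonal.antidiagonal n, c ij.1 * d ij.2) * t ^ n := by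
  let p : Polynomial R := ∑ i ∈ range N, Polynomial.C (c i) * Polynomial.X ^ i
  let q : Polynomial R := ∑ i ∈ range N, Polynomial.C (d i) * Polynomial.X ^ i
  let r : Polynomial R := ∑ n ∈ range N,
    Polynomial.C (∑ ij ∈ HasAntidiagonal.antidiagonal n, c ij.1 * d ij.2) * Polynomial.X ^ n
  have h : Polynomial.X ^ N ∣ p * q - r := by
    rw [Polynomial.X_pow_dvd_iff]
    intro k hk
    rw [Polynomial.coeff_sub, Polynomial.coeff_mul]
    simp only [p, q, r, Polynomial.finsetSum_coeff, Polynomial.coeff_C_mul_X_pow,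
      Finset.sum_ite_eq, mem_range, hk, if_true]
    rw [sub_eq_zero]
    refine sum_congr rfl fun ij hij => ?_
    have := HasAntidiagonal.mem_antidiagonal.1 hij
    rw [if_pos (by omega), if_pos (by omega)]
  obtain ⟨s, hs⟩ := h
  refine ⟨s.eval t, ?_⟩
  have := congrArg (Polynomial.eval t) hs
  simpa [p, q, r, Polynomial.eval_finsetSum] using this

/-- The functional equation, truncated. -/
theorem W_equation {R : Type*} [CommRing R] (x t : R) (N : ℕ) :
    t ^ (N + 1) ∣ (x - 1) * (∑ k ∈ range (N + 1), W x k * t ^ k) - (x * (x - 1)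
      + x * t * ((∑ k ∈ range (N + 1), W x k * t ^ k) *
        (∑ k ∈ range (N + 1), W x k * t ^ k - ∑ k ∈ range (N + 1), W 1 k * t ^ k))) := by
  obtain ⟨s, hs⟩ := trunc_mul_dvd (fun k => W x k) (fun k => W x k - W 1 k) t (N + 1)
  have h1 : ∑ k ∈ range (N + 1), W x k * t ^ k - ∑ k ∈ range (N + 1), W 1 k * t ^ k
      = ∑ k ∈ range (N + 1), (W x k - W 1 k) * t ^ k := by
    rw [← sum_sub_distrib]
    exact sum_congr rfl fun _ _ => by ring
  rw [h1, sub_eq_iff_eq_add.1 hs, sum_range_succ', mul_add, mul_sum]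
  have h2 : ∀ k ∈ range N, (x - 1) * (W x (k + 1) * t ^ (k + 1)) =
      x * t * ((∑ ij ∈ HasAntidiagonal.antidiagonal k, W x ij.1 * (W x ij.2 - W 1 ij.2)) * t ^ k) := by
    intro k _
    rw [← mul_assoc, W_succ]
    ring
  rw [sum_congr rfl h2, ← mul_sum, sum_range_succ, W_zero]
  generalize (∑ k ∈ range N, (∑ ij ∈ HasAntidiagonal.antidiagonal k,
    W x ij.1 * (W x ij.2 - W 1 ij.2)) * t ^ k) = Y
  generalize (∑ ij ∈ HasAntidiagonal.antidiagonal N, W x ij.1 * (W x ij.2 - W 1 ij.2)) = Z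
  exact ⟨- x * t * s - x * Z, by ring⟩

open PowerSeries in
/-- The generating function after the change of variable. -/
theorem W_one_gf (N : ℕ) :
    (X : PowerSeries (Polynomial ℚ)) ^ (N + 1) ∣
      (1 - X) ^ 3 * (∑ k ∈ range (N + 1), ((ints k).card : PowerSeries (Polynomial ℚ)) *
        (X * (1 - X) ^ 3) ^ k) - (1 - 2 * X) := by
  obtain ⟨z, hz⟩ : ∃ z, z = (X : PowerSeries (Polynomial ℚ)) := ⟨_, rfl⟩
  obtain ⟨u, hu⟩ : ∃ u, u = (C Polynomial.X : PowerSeries (Polynomial ℚ)) := ⟨_, rfl⟩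
  have hzc : constantCoeff z = 0 := by simp [hz]
  have huc : constantCoeff u = Polynomial.X := by simp [hu]
  obtain ⟨a, ha⟩ : ∃ a, (1 + z * u) * a = 1 := by
    apply IsUnit.exists_right_inv
    rw [PowerSeries.isUnit_iff_constantCoeff]
    simp [hzc]
  obtain ⟨b, hb⟩ : ∃ b, (1 - z) * b = 1 := by
    apply IsUnit.exists_right_inv
    rw [PowerSeries.isUnit_iff_constantCoeff]
    simp [hzc]
  have hac : constantCoeff a = 1 := by simpa [hzc] using congrArg constantCoeff ha
  let e : PowerSeries (Polynomial ℚ) →+* PowerSeries (Polynomial ℚ) :=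
    PowerSeries.map (Polynomial.C.comp (Polynomial.evalRingHom 0))
  have hez : e z = z := by simp [e, hz]
  have heu : e u = 0 := by simp [e, hu]
  have hea : e a = 1 := by simpa [hez, heu] using congrArg e ha
  have heb : e b = b := by
    have h : (1 - z) * e b = 1 := by simpa [hez] using congrArg e hb
    linear_combination b * h - e b * hb
  obtain ⟨x, hx⟩ : ∃ x, x = (1 + u) * a ^ 2 := ⟨_, rfl⟩
  obtain ⟨t, ht⟩ : ∃ t, t = z * (1 - z) ^ 3 := ⟨_, rfl⟩
  obtain ⟨Q, hQ⟩ : ∃ Q, Q = (1 + u) * (1 - 2 * z - z ^ 2 * u) * a * b ^ 3 := ⟨_, rfl⟩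
  have hex : e x = 1 := by simp [hx, heu, hea]
  have het : e t = t := by simp [ht, hez]
  have heQ : e Q = (1 - 2 * z) * b ^ 3 := by
    have he2 : e 2 = 2 := map_ofNat e 2
    simp [hQ, heu, hez, hea, heb, he2]
  have hxc : constantCoeff (x - 1) = Polynomial.X := by simp [hx, huc, hac]
  have hx1 : x - 1 = u * (1 - 2 * z - z ^ 2 * u) * a ^ 2 := by
    rw [hx]
    linear_combination (1 + (1 + z * u) * a) * ha
  have htb : t * b ^ 3 = z := by
    have : (1 - z) ^ 3 * b ^ 3 = 1 := by rw [← mul_pow, hb, one_pow]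
    rw [ht]; linear_combination z * this
  have hQeq : (x - 1) * Q = x * (x - 1) + x * t * (Q * (Q - e Q)) := by
    have hb3 : (1 - z) ^ 3 * b ^ 3 = 1 := by rw [← mul_pow, hb, one_pow]
    have hD : Q - e Q = u * (1 - 3 * z + z ^ 2 - z ^ 2 * u) * a * b ^ 3 := by
      rw [heQ, hQ]
      linear_combination (1 - 2 * z) * b ^ 3 * ha
    have hQx : Q - x = z * (1 + u) ^ 2 * (1 - 3 * z + z ^ 2 - z ^ 2 * u) * a ^ 2 * b ^ 3 := by
      rw [hQ, hx]
      linear_combination (1 + u) * a ^ 2 * hb3 - (1 + u) * (1 - 2 * z - z ^ 2 * u) * a * b ^ 3 * ha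
    have h1 : (x - 1) * Q - x * (x - 1) = (x - 1) * (Q - x) := by ring
    rw [← sub_eq_iff_eq_add', h1, hQx, hD, hx1, hQ, hx]
    linear_combination (-(1 + u) ^ 2 * a ^ 4 * (1 - 2 * z - z ^ 2 * u) * u *
      (1 - 3 * z + z ^ 2 - z ^ 2 * u) * b ^ 3) * htb
  obtain ⟨P, hP⟩ : ∃ P, P = ∑ k ∈ range (N + 1), W x k * t ^ k := ⟨_, rfl⟩
  have heP : e P = ∑ k ∈ range (N + 1), W 1 k * t ^ k := by
    simp [hP, map_W, hex, het]
  have hPeq : z ^ (N + 1) ∣ (x - 1) * P - (x * (x - 1) + x * t * (P * (P - e P))) := by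
    have h := W_equation x t N
    rw [← heP, ← hP] at h
    refine (pow_dvd_pow_of_dvd ?_ _).trans h
    rw [ht]; exact dvd_mul_right _ _
  have hzp : Prime z := by rw [hz]; exact PowerSeries.X_prime
  have hzx : ¬ z ∣ x - 1 := by
    rw [hz, PowerSeries.X_dvd_iff, hxc]
    exact Polynomial.X_ne_zero
  have key : ∀ k ≤ N + 1, z ^ k ∣ P - Q := by
    intro k
    induction k with
    | zero => simp
    | succ k ih =>
      intro hk
      obtain ⟨s, hs⟩ := ih (by omega)
      have hes : e P - e Q = z ^ k * e s := by
        simpa [hez] using congrArg e hs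
      refine hzp.pow_dvd_of_dvd_mul_left _ hzx ?_
      obtain ⟨w, hw⟩ := (pow_dvd_pow z hk).trans hPeq
      refine ⟨w + x * (1 - z) ^ 3 * (s * (P - e P) + Q * (s - e s)), ?_⟩
      rw [ht] at hw hQeq
      linear_combination hw - hQeq + x * (z * (1 - z) ^ 3) * ((P - e P) * hs + Q * (hs - hes))
  obtain ⟨s, hs⟩ := key (N + 1) le_rfl
  have hes : e P - e Q = z ^ (N + 1) * e s := by
    simpa [hez] using congrArg e hs
  rw [heQ, heP] at hes
  simp only [W_one] at hes
  rw [← hz, ← ht]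
  refine ⟨(1 - z) ^ 3 * e s, ?_⟩
  have hb3 : (1 - z) ^ 3 * b ^ 3 = 1 := by rw [← mul_pow, hb, one_pow]
  linear_combination (1 - z) ^ 3 * hes + (1 - 2 * z) * hb3

open PowerSeries in
theorem coeff_one_sub_pow (m j : ℕ) :
    coeff j ((1 - X : PowerSeries (Polynomial ℚ)) ^ m) = (-1) ^ j * (m.choose j : Polynomial ℚ) := by
  have h : (1 - X : PowerSeries (Polynomial ℚ)) ^ m =
      (((1 + Polynomial.X : Polynomial (Polynomial ℚ)) ^ m).comp
        (Polynomial.C (-1) * Polynomial.X) : Polynomial (Polynomial ℚ)) := by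
    simp [sub_eq_add_neg]
  rw [h, Polynomial.coeff_coe, Polynomial.comp_C_mul_X_coeff, Polynomial.coeff_one_add_X_pow,
    mul_comm]

open PowerSeries in
/-- Linear system satisfied by the interval counts. -/
theorem card_system (m : ℕ) (hm : 2 ≤ m) :
    ∑ k ∈ range (m + 1), ((ints k).card : ℚ) * ((-1) ^ (m - k) * ((3 * k + 3).choose (m - k) : ℚ))
      = 0 := by
  have h := PowerSeries.X_pow_dvd_iff.1 (W_one_gf m) m (by omega)
  have h1 : coeff m (1 - 2 * X : PowerSeries (Polynomial ℚ)) = 0 := by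
    have : (1 - 2 * X : PowerSeries (Polynomial ℚ)) = 1 - C 2 * X := by
      rw [map_ofNat]
    rw [this, map_sub, coeff_C_mul, coeff_X, coeff_one, if_neg (by omega), if_neg (by omega)]
    simp
  rw [map_sub, h1, sub_zero, mul_sum, map_sum] at h
  have h2 : ∀ k ∈ range (m + 1), coeff m ((1 - X) ^ 3 *
      (((ints k).card : PowerSeries (Polynomial ℚ)) * (X * (1 - X) ^ 3) ^ k)) =
      Polynomial.C (((ints k).card : ℚ) *
        ((-1) ^ (m - k) * ((3 * k + 3).choose (m - k) : ℚ))) := by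
    intro k hk
    have hk' : k ≤ m := by simpa [Nat.lt_succ_iff] using hk
    have : (1 - X) ^ 3 * (((ints k).card : PowerSeries (Polynomial ℚ)) * (X * (1 - X) ^ 3) ^ k)
        = C ((ints k).card : Polynomial ℚ) * ((1 - X) ^ (3 * k + 3) * X ^ k) := by
      rw [map_natCast, mul_pow, ← pow_mul]; ring
    rw [this, coeff_C_mul, coeff_mul_X_pow', if_pos hk', coeff_one_sub_pow]
    simp
  rw [sum_congr rfl h2, ← map_sum] at h
  exact Polynomial.C_eq_zero.1 h

/-- The closed form. -/
noncomputable def closed (k : ℕ) : ℚ :=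
  2 * (4 * k + 1).factorial / ((k + 1).factorial * (3 * k + 2).factorial)

theorem closed_term (m k : ℕ) (hm : 2 ≤ m) (hk : k ≤ m) :
    closed k * ((3 * k + 3).choose (m - k) : ℚ) =
      6 / m.factorial * (m.choose k * ((4 * k + 1).descFactorial (m - 2) : ℚ)) := by
  have f0 : ∀ n : ℕ, (n.factorial : ℚ) ≠ 0 := fun n => by exact_mod_cast n.factorial_ne_zero
  rw [closed]
  by_cases h : m ≤ 4 * k + 3
  · rw [Nat.cast_choose ℚ (show m - k ≤ 3 * k + 3 by omega), Nat.cast_choose ℚ hk]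
    have h1 : (((4 * k + 3 - m).factorial : ℚ)) * ((4 * k + 1).descFactorial (m - 2) : ℚ)
        = (4 * k + 1).factorial := by
      have := Nat.factorial_mul_descFactorial (show m - 2 ≤ 4 * k + 1 by omega)
      rw [show 4 * k + 1 - (m - 2) = 4 * k + 3 - m by omega] at this
      exact_mod_cast this
    rw [← h1, show 3 * k + 3 - (m - k) = 4 * k + 3 - m by omega,
      show (3 * k + 3).factorial = (3 * k + 3) * (3 * k + 2).factorial from Nat.factorial_succ _,
      Nat.factorial_succ k]
    have := f0 (3 * k + 2)
    have := f0 (4 * k + 3 - m)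
    have := f0 (m - k)
    have := f0 k
    have := f0 m
    have : (k : ℚ) + 1 ≠ 0 := by positivity
    push_cast
    field_simp
    ring
  · rw [Nat.choose_eq_zero_of_lt (by omega), Nat.descFactorial_eq_zero_iff_lt.2 (by omega)]
    simp

theorem closed_system (m : ℕ) (hm : 2 ≤ m) :
    ∑ k ∈ range (m + 1), closed k * ((-1) ^ (m - k) * ((3 * k + 3).choose (m - k) : ℚ)) = 0 := by
  let P : Polynomial ℚ := (descPochhammer ℚ (m - 2)).comp (4 * Polynomial.X + 1)
  have hP : P.natDegree < m := by
    refine lt_of_le_of_lt Polynomial.natDegree_comp_le ?_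
    rw [descPochhammer_natDegree]
    have : (4 * Polynomial.X + 1 : Polynomial ℚ).natDegree ≤ 1 := by compute_degree
    calc (m - 2) * _ ≤ (m - 2) * 1 := Nat.mul_le_mul_left _ this
      _ < m := by omega
  have h := congrFun (Polynomial.fwdDiff_iter_eq_zero_of_degree_lt hP) 0
  rw [fwdDiff_iter_eq_sum_shift] at h
  have h2 : ∀ k ∈ range (m + 1),
      closed k * ((-1) ^ (m - k) * ((3 * k + 3).choose (m - k) : ℚ)) =
      6 / m.factorial * (((-1 : ℤ) ^ (m - k) * m.choose k) • Polynomial.eval (0 + k • (1 : ℚ)) P) := by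
    intro k hk
    have hk' : k ≤ m := by simpa [Nat.lt_succ_iff] using hk
    have he : Polynomial.eval (0 + k • (1 : ℚ)) P = ((4 * k + 1).descFactorial (m - 2) : ℚ) := by
      rw [← descPochhammer_eval_eq_descFactorial]
      simp [P, Polynomial.eval_comp]
    rw [he, zsmul_eq_mul]
    push_cast
    linear_combination (-1) ^ (m - k) * closed_term m k hm hk'
  rw [sum_congr rfl h2, ← mul_sum, h]
  simp

theorem card_zero : (ints 0).card = 1 := by simp [ints_zero]

theorem card_one : (ints 1).card = 1 := by
  have h := W_succ_aux (1 : ℤ) 0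
  rw [W_one] at h
  simp [ints_zero, splits] at h
  exact_mod_cast h

theorem card_eq_closed (n : ℕ) : ((ints n).card : ℚ) = closed n := by
  induction n using Nat.strong_induction_on with
  | _ n ih =>
    obtain rfl | rfl | hn : n = 0 ∨ n = 1 ∨ 2 ≤ n := by omega
    · simp [card_zero, closed]
    · rw [card_one, closed]; norm_num [Nat.factorial]
    · have h := (card_system n hn).trans (closed_system n hn).symm
      rw [sum_range_succ, sum_range_succ,
        sum_congr rfl fun k hk => by rw [ih k (mem_range.1 hk)]] at h
      simpa using h

theorem closed_choose (n : ℕ) (hn : 1 ≤ n) :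
    (n : ℚ) * (n + 1) * closed n = 2 * ((4 * n + 1).choose (n - 1) : ℚ) := by
  obtain ⟨n, rfl⟩ : ∃ k, n = k + 1 := ⟨n - 1, by omega⟩
  have f0 : ∀ n : ℕ, (n.factorial : ℚ) ≠ 0 := fun n => by exact_mod_cast n.factorial_ne_zero
  rw [closed, Nat.cast_choose ℚ (by omega), Nat.add_sub_cancel,
    show 4 * (n + 1) + 1 - n = 3 * (n + 1) + 2 by omega,
    Nat.factorial_succ (n + 1), Nat.factorial_succ n]
  have := f0 (3 * (n + 1) + 2)
  have := f0 n
  have : (n : ℚ) + 1 ≠ 0 := by positivity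
  have : (n : ℚ) + 1 + 1 ≠ 0 := by positivity
  push_cast
  field_simp

end BT

theorem count_tamari_intervals (n : ℕ) (hn : 1 ≤ n) :
    n * (n + 1) * Set.ncard {p : BT × BT | BT.interval p n} =
      2 * Nat.choose (4 * n + 1) (n - 1) := by
  rw [Set.ncard_eq_toFinset_card _ (BT.finite_interval n)]
  have h := BT.closed_choose n hn
  rw [← BT.card_eq_closed] at h
  exact_mod_cast h
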